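/- arXiv:1812.05646 — 3 statements merged into one kernel-verified Lean document; each statement's English description precedes it below -/
import Mathlib

section
/- Let U ⊆ ℝ⁴ be open and let Γ^n_{bm} : U → ℝ (n,m,b ∈ Fin 4) be smooth connection coefficients with curvature R^n_{m ab} = ∂_a Γ^n_{bm} − ∂_b Γ^n_{am} + Σ_l (Γ^n_{al} Γ^l_{bm} − Γ^n_{bl} Γ^l_{am}). Then the Levi-Civita–contracted (dual) Bianchi identity holds: for every a, n, m ∈ Fin 4 and every point of U, Σ_{b,c,d} ε̃(a,b,c,d) ( ∂_b R^n_{m cd} + Σ_l ( Γ^n_{bl} R^l_{m cd} − R^n_{l cd} Γ^l_{bm} ) ) = 0. -/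
open scoped BigOperators

/-- The Levi-Civita symbol on `Fin 4`: the sign of the permutation sending
`(0,1,2,3)` to `(a,b,c,d)` when the four indices are distinct, and `0` otherwise. -/
noncomputable def leviCivita (a b c d : Fin 4) : ℝ :=
  ∑ σ : Equiv.Perm (Fin 4),
    if σ 0 = a ∧ σ 1 = b ∧ σ 2 = c ∧ σ 3 = d then ((Equiv.Perm.sign σ : ℤ) : ℝ) else 0

/-- Partial derivative of `f : (Fin 4 → ℝ) → ℝ` in the `a`-th coordinate direction. -/
noncomputable def pd (a : Fin 4) (f : (Fin 4 → ℝ) → ℝ) (x : Fin 4 → ℝ) : ℝ :=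
  fderiv ℝ f x (Pi.single a 1)

/-- The curvature `R^n_{m ab}` of the connection coefficients `Γ^n_{bm}`. -/
noncomputable def curv (Γ : Fin 4 → Fin 4 → Fin 4 → (Fin 4 → ℝ) → ℝ)
    (n m a b : Fin 4) (x : Fin 4 → ℝ) : ℝ :=
  pd a (Γ n b m) x - pd b (Γ n a m) x
    + ∑ l : Fin 4, (Γ n a l x * Γ l b m x - Γ n b l x * Γ l a m x)

/-!
The matrices `A_b = (Γ^n_{bm})_{nm}` are the coefficients of a matrix-valued connection: its
curvature is `F_cd = ∂_c A_d - ∂_d A_c + [A_c, A_d]`, and the expression contracted with `ε̃` is the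
`(n, m)` entry of `∂_b F_cd + [A_b, F_cd]`. In the cyclic sum of the latter over `b, c, d`, second
derivatives cancel by symmetry, the terms `[∂A, A]` by the Leibniz rule and skew-symmetry, and the
cubic terms by the Jacobi identity. Since `ε̃` is invariant under cyclic permutations of its last
three indices, three times the contracted sum is the contraction of this vanishing cyclic sum.
-/

-- Any submultiplicative matrix norm would do: derivatives depend only on the topology.
open scoped ContDiff Matrix.Norms.Operator

section Contraction

theorem leviCivita_eq_det (v : Fin 4 → Fin 4) :
    leviCivita (v 0) (v 1) (v 2) (v 3) = ((1 : Matrix (Fin 4) (Fin 4) ℝ).submatrix id v).det := by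
  rw [Matrix.det_apply']
  refine Finset.sum_congr rfl fun σ _ => ?_
  simp [Matrix.one_apply, Fintype.prod_boole, Fin.forall_fin_succ]

theorem leviCivita_comp_perm (v : Fin 4 → Fin 4) (τ : Equiv.Perm (Fin 4)) :
    leviCivita (v (τ 0)) (v (τ 1)) (v (τ 2)) (v (τ 3)) =
      Equiv.Perm.sign τ * leviCivita (v 0) (v 1) (v 2) (v 3) := by
  rw [leviCivita_eq_det v, ← Matrix.det_permute', Matrix.submatrix_submatrix]
  exact leviCivita_eq_det (v ∘ τ)

theorem leviCivita_rotate (a b c d : Fin 4) : leviCivita a c d b = leviCivita a b c d := by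
  let τ : Equiv.Perm (Fin 4) := Equiv.swap 1 2 * Equiv.swap 2 3
  have sign_τ : Equiv.Perm.sign τ = 1 := by decide
  calc leviCivita a c d b
      = Equiv.Perm.sign τ * leviCivita a b c d := leviCivita_comp_perm ![a, b, c, d] τ
    _ = leviCivita a b c d := by rw [sign_τ, Units.val_one, Int.cast_one, one_mul]

variable {ι R M : Type*} [Fintype ι] [AddCommMonoid M]

theorem sum_rotate (f : ι → ι → ι → M) : ∑ b, ∑ c, ∑ d, f c d b = ∑ b, ∑ c, ∑ d, f b c d := by
  rw [Finset.sum_comm]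
  exact Finset.sum_congr rfl fun _ _ => Finset.sum_comm

theorem sum_smul_eq_zero_of_rotate [IsAddTorsionFree M] [DistribSMul R M]
    {ε : ι → ι → ι → R} {B : ι → ι → ι → M} (hε : ∀ b c d, ε c d b = ε b c d)
    (hB : ∀ b c d, B b c d + B c d b + B d b c = 0) :
    ∑ b, ∑ c, ∑ d, ε b c d • B b c d = 0 := by
  have rotate_once : ∑ b, ∑ c, ∑ d, ε b c d • B c d b = ∑ b, ∑ c, ∑ d, ε b c d • B b c d := by
    simpa only [hε] using sum_rotate fun b c d => ε b c d • B b c d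
  have rotate_twice : ∑ b, ∑ c, ∑ d, ε b c d • B d b c = ∑ b, ∑ c, ∑ d, ε b c d • B b c d := by
    rw [← rotate_once]
    simpa only [hε] using sum_rotate fun b c d => ε b c d • B c d b
  refine (nsmul_eq_zero_iff_right three_ne_zero).mp ?_
  calc 3 • ∑ b, ∑ c, ∑ d, ε b c d • B b c d
      = ∑ b, ∑ c, ∑ d, ε b c d • B b c d + ∑ b, ∑ c, ∑ d, ε b c d • B c d b
          + ∑ b, ∑ c, ∑ d, ε b c d • B d b c := by
        rw [rotate_twice, rotate_once, succ_nsmul, two_nsmul]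
    _ = ∑ b, ∑ c, ∑ d, ε b c d • (B b c d + B c d b + B d b c) := by
        simp only [smul_add, Finset.sum_add_distrib]
    _ = 0 := by simp only [hB, smul_zero, Finset.sum_const_zero]

end Contraction

section Connection

variable {𝕜 E : Type*} [NontriviallyNormedField 𝕜] [NormedAddCommGroup E] [NormedSpace 𝕜 E]

section SecondDerivative

variable {F : Type*} [NormedAddCommGroup F] [NormedSpace 𝕜 F] {f : E → F} {x : E}

theorem differentiableAt_fderiv (hf : ContDiffAt 𝕜 2 f x) : DifferentiableAt 𝕜 (fderiv 𝕜 f) x :=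
  (hf.fderiv_right (m := 1) one_add_one_eq_two.le).differentiableAt one_ne_zero

theorem differentiableAt_fderiv_apply (hf : ContDiffAt 𝕜 2 f x) (v : E) :
    DifferentiableAt 𝕜 (fun y => fderiv 𝕜 f y v) x :=
  (differentiableAt_fderiv hf).clm_apply (differentiableAt_const v)

theorem fderiv_fderiv_apply_comm (hf : ContDiffAt 𝕜 (minSmoothness 𝕜 2) f x) (u v : E) :
    fderiv 𝕜 (fun y => fderiv 𝕜 f y v) x u = fderiv 𝕜 (fun y => fderiv 𝕜 f y u) x v := by
  have second_derivative (v w : E) :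
      fderiv 𝕜 (fun y => fderiv 𝕜 f y v) x w = fderiv 𝕜 (fderiv 𝕜 f) x w v := by
    rw [fderiv_clm_apply (differentiableAt_fderiv (hf.of_le le_minSmoothness))
      (differentiableAt_const v)]
    simp
  rw [second_derivative, second_derivative]
  exact (hf.isSymmSndFDerivAt le_rfl).eq u v

end SecondDerivative

variable {𝔸 : Type*} [NormedRing 𝔸] [NormedAlgebra 𝕜 𝔸]

theorem differentiableAt_lie {f g : E → 𝔸} {x : E} (hf : DifferentiableAt 𝕜 f x)
    (hg : DifferentiableAt 𝕜 g x) : DifferentiableAt 𝕜 (fun y => ⁅f y, g y⁆) x :=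
  (hf.fun_mul hg).fun_sub (hg.fun_mul hf)

theorem fderiv_lie_apply {f g : E → 𝔸} {x : E} (hf : DifferentiableAt 𝕜 f x)
    (hg : DifferentiableAt 𝕜 g x) (v : E) :
    fderiv 𝕜 (fun y => ⁅f y, g y⁆) x v = ⁅fderiv 𝕜 f x v, g x⁆ + ⁅f x, fderiv 𝕜 g x v⁆ := by
  simp only [Ring.lie_def]
  rw [fderiv_fun_sub (hf.fun_mul hg) (hg.fun_mul hf), fderiv_fun_mul' hf hg, fderiv_fun_mul' hg hf]
  simp only [sub_apply, add_apply, smul_apply, smul_eq_mul, MulOpposite.smul_eq_mul_unop,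
    MulOpposite.unop_op]
  abel

variable {ι : Type*}

variable (𝕜) in
/-- The curvature `∂_a A_b - ∂_b A_a + [A_a, A_b]` of the `𝔸`-valued connection with coefficients
`A`. Here `A b` is the connection form evaluated on the constant vector field `e b` and `∂_b` is the
derivative along `e b`; constant fields commute, so there is no `A_{[e_a, e_b]}` term. -/
noncomputable def connCurvature (e : ι → E) (A : ι → E → 𝔸) (a b : ι) (x : E) : 𝔸 :=
  fderiv 𝕜 (A b) x (e a) - fderiv 𝕜 (A a) x (e b) + ⁅A a x, A b x⁆

variable (𝕜) in
/-- The covariant derivative `∂_b F + [A_b, F]` of an `𝔸`-valued field `F`, on which the connection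
acts through the adjoint representation. -/
noncomputable def connDeriv (e : ι → E) (A : ι → E → 𝔸) (b : ι) (F : E → 𝔸) (x : E) : 𝔸 :=
  fderiv 𝕜 F x (e b) + ⁅A b x, F x⁆

variable {e : ι → E} {A : ι → E → 𝔸} {b c d : ι} {x : E}

theorem differentiableAt_connCurvature (hc : ContDiffAt 𝕜 2 (A c) x) (hd : ContDiffAt 𝕜 2 (A d) x) :
    DifferentiableAt 𝕜 (connCurvature 𝕜 e A c d) x :=
  ((differentiableAt_fderiv_apply hd _).fun_sub (differentiableAt_fderiv_apply hc _)).fun_add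
    (differentiableAt_lie (hc.differentiableAt two_ne_zero) (hd.differentiableAt two_ne_zero))

theorem fderiv_connCurvature_apply (hc : ContDiffAt 𝕜 2 (A c) x) (hd : ContDiffAt 𝕜 2 (A d) x)
    (v : E) :
    fderiv 𝕜 (connCurvature 𝕜 e A c d) x v =
      fderiv 𝕜 (fun y => fderiv 𝕜 (A d) y (e c)) x v
        - fderiv 𝕜 (fun y => fderiv 𝕜 (A c) y (e d)) x v
        + (⁅fderiv 𝕜 (A c) x v, A d x⁆ + ⁅A c x, fderiv 𝕜 (A d) x v⁆) := by
  have hAc : DifferentiableAt 𝕜 (A c) x := hc.differentiableAt two_ne_zero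
  have hAd : DifferentiableAt 𝕜 (A d) x := hd.differentiableAt two_ne_zero
  have hdAc := differentiableAt_fderiv_apply hc (e d)
  have hdAd := differentiableAt_fderiv_apply hd (e c)
  unfold connCurvature
  rw [fderiv_fun_add (hdAd.fun_sub hdAc) (differentiableAt_lie hAc hAd),
    fderiv_fun_sub hdAd hdAc, add_apply, sub_apply, fderiv_lie_apply hAc hAd]

attribute [local instance] LieRing.ofAssociativeRing in
theorem connDeriv_connCurvature_cyclic (hb : ContDiffAt 𝕜 (minSmoothness 𝕜 2) (A b) x)
    (hc : ContDiffAt 𝕜 (minSmoothness 𝕜 2) (A c) x)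
    (hd : ContDiffAt 𝕜 (minSmoothness 𝕜 2) (A d) x) :
    connDeriv 𝕜 e A b (connCurvature 𝕜 e A c d) x
      + connDeriv 𝕜 e A c (connCurvature 𝕜 e A d b) x
      + connDeriv 𝕜 e A d (connCurvature 𝕜 e A b c) x = 0 := by
  have hb2 : ContDiffAt 𝕜 2 (A b) x := hb.of_le le_minSmoothness
  have hc2 : ContDiffAt 𝕜 2 (A c) x := hc.of_le le_minSmoothness
  have hd2 : ContDiffAt 𝕜 2 (A d) x := hd.of_le le_minSmoothness
  have skew (i j k : ι) :
      ⁅A i x, fderiv 𝕜 (A j) x (e k)⁆ = -⁅fderiv 𝕜 (A j) x (e k), A i x⁆ :=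
    (lie_skew _ _).symm
  simp only [connDeriv, fderiv_connCurvature_apply hc2 hd2, fderiv_connCurvature_apply hd2 hb2,
    fderiv_connCurvature_apply hb2 hc2]
  rw [fderiv_fderiv_apply_comm hd (e b) (e c), fderiv_fderiv_apply_comm hc (e b) (e d),
    fderiv_fderiv_apply_comm hb (e c) (e d)]
  simp only [connCurvature, lie_add, lie_sub, skew]
  calc
    _ = ⁅A b x, ⁅A c x, A d x⁆⁆ + ⁅A c x, ⁅A d x, A b x⁆⁆ + ⁅A d x, ⁅A b x, A c x⁆⁆ := by abel
    _ = 0 := lie_jacobi _ _ _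

end Connection

theorem dual_bianchi_identity_general {E 𝔸 : Type*} [NormedAddCommGroup E] [NormedSpace ℝ E]
    [NormedRing 𝔸] [NormedAlgebra ℝ 𝔸] (e : Fin 4 → E) {A : Fin 4 → E → 𝔸} {x : E}
    (hA : ∀ i, ContDiffAt ℝ 2 (A i) x) (a : Fin 4) :
    ∑ b, ∑ c, ∑ d,
      leviCivita a b c d • connDeriv ℝ e A b (connCurvature ℝ e A c d) x = 0 := by
  have : IsAddTorsionFree 𝔸 := .of_isTorsionFree ℝ 𝔸
  have hA' (i : Fin 4) : ContDiffAt ℝ (minSmoothness ℝ 2) (A i) x := by simpa using hA i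
  exact sum_smul_eq_zero_of_rotate (leviCivita_rotate a) fun b c d =>
    connDeriv_connCurvature_cyclic (hA' b) (hA' c) (hA' d)

section Components

section MatrixValued

variable {𝕜 E κ κ' : Type*} [NontriviallyNormedField 𝕜] [NormedAddCommGroup E] [NormedSpace 𝕜 E]
  {F : E → Matrix κ κ' 𝕜} {x : E}

theorem contDiffAt_matrix [CompleteSpace 𝕜] [Fintype κ] [Fintype κ'] {n : ℕ∞ω}
    (hF : ∀ i j, ContDiffAt 𝕜 n (fun y => F y i j) x) : ContDiffAt 𝕜 n F x :=
  (Matrix.ofLinearEquiv 𝕜 : (κ → κ' → 𝕜) ≃ₗ[𝕜] _).toContinuousLinearEquiv.contDiff.contDiffAt.comp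
    x (contDiffAt_pi.2 fun i => contDiffAt_pi.2 (hF i))

theorem fderiv_matrix_apply [Finite κ] [Finite κ'] (hF : DifferentiableAt 𝕜 F x) (v : E)
    (i : κ) (j : κ') : fderiv 𝕜 F x v i j = fderiv 𝕜 (fun y => F y i j) x v := by
  have := Fintype.ofFinite κ
  have := Fintype.ofFinite κ'
  let entry : Matrix κ κ' 𝕜 →L[𝕜] 𝕜 :=
    ⟨Matrix.entryLinearMap 𝕜 𝕜 i j, continuous_id.matrix_elem i j⟩
  exact congrArg (· v) (entry.hasFDerivAt.comp x hF.hasFDerivAt).fderiv.symm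

theorem lie_matrix_apply {R : Type*} [Fintype κ] [NonUnitalNonAssocRing R]
    (M N : Matrix κ κ R) (i j : κ) : ⁅M, N⁆ i j = ∑ l, (M i l * N l j - N i l * M l j) := by
  simp only [Ring.lie_def, Matrix.sub_apply, Matrix.mul_apply, Finset.sum_sub_distrib]

end MatrixValued

/-- The matrices `(A_b)_{nm} = Γ^n_{bm}` of the connection in the coordinate direction `b`. -/
def connMatrix (Γ : Fin 4 → Fin 4 → Fin 4 → (Fin 4 → ℝ) → ℝ) (b : Fin 4) (x : Fin 4 → ℝ) :
    Matrix (Fin 4) (Fin 4) ℝ :=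
  Matrix.of fun n m => Γ n b m x

variable {Γ : Fin 4 → Fin 4 → Fin 4 → (Fin 4 → ℝ) → ℝ} {c d : Fin 4} {x : Fin 4 → ℝ}

theorem contDiffAt_connMatrix {k : ℕ∞ω} {b : Fin 4}
    (hΓ : ∀ n m, ContDiffAt ℝ k (Γ n b m) x) : ContDiffAt ℝ k (connMatrix Γ b) x :=
  contDiffAt_matrix hΓ

theorem connCurvature_connMatrix_apply (hc : DifferentiableAt ℝ (connMatrix Γ c) x)
    (hd : DifferentiableAt ℝ (connMatrix Γ d) x) (n m : Fin 4) :
    connCurvature ℝ (Pi.single · 1) (connMatrix Γ) c d x n m = curv Γ n m c d x :=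
  congrArg₂ (· + ·)
    (congrArg₂ (· - ·) (fderiv_matrix_apply hd _ n m) (fderiv_matrix_apply hc _ n m))
    (lie_matrix_apply _ _ n m)

theorem connDeriv_connCurvature_connMatrix_apply
    (hc : ContDiffAt ℝ 2 (connMatrix Γ c) x) (hd : ContDiffAt ℝ 2 (connMatrix Γ d) x)
    (n m b : Fin 4) :
    connDeriv ℝ (Pi.single · 1) (connMatrix Γ) b
        (connCurvature ℝ (Pi.single · 1) (connMatrix Γ) c d) x n m =
      pd b (curv Γ n m c d) x
        + ∑ l, (Γ n b l x * curv Γ l m c d x - curv Γ n l c d x * Γ l b m x) := by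
  have differentiable_near {i : Fin 4} (hi : ContDiffAt ℝ 2 (connMatrix Γ i) x) :
      ∀ᶠ y in nhds x, DifferentiableAt ℝ (connMatrix Γ i) y :=
    (hi.eventually (by simp)).mono fun _ h => h.differentiableAt two_ne_zero
  have curv_near (n m : Fin 4) :
      (fun y => connCurvature ℝ (Pi.single · 1) (connMatrix Γ) c d y n m)
        =ᶠ[nhds x] curv Γ n m c d := by
    filter_upwards [differentiable_near hc, differentiable_near hd] with y hcy hdy
    exact connCurvature_connMatrix_apply hcy hdy n m
  have entry_fderiv : fderiv ℝ (connCurvature ℝ (Pi.single · 1) (connMatrix Γ) c d) x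
      (Pi.single b 1) n m = pd b (curv Γ n m c d) x :=
    (fderiv_matrix_apply (differentiableAt_connCurvature hc hd) _ n m).trans
      (DFunLike.congr_fun (curv_near n m).fderiv_eq _)
  have entry_lie : ⁅connMatrix Γ b x, connCurvature ℝ (Pi.single · 1) (connMatrix Γ) c d x⁆ n m =
      ∑ l, (Γ n b l x * curv Γ l m c d x - curv Γ n l c d x * Γ l b m x) := by
    simp only [lie_matrix_apply, (curv_near _ _).eq_of_nhds]
    rfl
  exact congrArg₂ (· + ·) entry_fderiv entry_lie

end Components

/-- The Levi-Civita–contracted (dual) differential Bianchi identity: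
`ε̃(a,b,c,d) ( ∂_b R^n_{m cd} + Γ^n_{bl} R^l_{m cd} − R^n_{l cd} Γ^l_{bm} ) = 0`. -/
theorem dual_bianchi_identity
    (U : Set (Fin 4 → ℝ)) (hU : IsOpen U)
    (Γ : Fin 4 → Fin 4 → Fin 4 → (Fin 4 → ℝ) → ℝ)
    (hΓ : ∀ n b m : Fin 4, ContDiffOn ℝ (⊤ : ℕ∞) (Γ n b m) U) :
    ∀ x ∈ U, ∀ a n m : Fin 4,
      ∑ b : Fin 4, ∑ c : Fin 4, ∑ d : Fin 4,
        leviCivita a b c d *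
          (pd b (curv Γ n m c d) x
            + ∑ l : Fin 4, (Γ n b l x * curv Γ l m c d x - curv Γ n l c d x * Γ l b m x)) = 0 := by
  intro x hx a n m
  have hA (b : Fin 4) : ContDiffAt ℝ 2 (connMatrix Γ b) x := contDiffAt_connMatrix fun n m =>
    contDiffAt_infty.1 ((hΓ n b m).contDiffAt (hU.mem_nhds hx)) 2
  simpa only [Matrix.sum_apply, Matrix.smul_apply, smul_eq_mul, Matrix.zero_apply,
    connDeriv_connCurvature_connMatrix_apply (hA _) (hA _)]
    using congrFun₂ (dual_bianchi_identity_general (Pi.single · 1) hA a) n m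
end

section
/- Let f : EuclideanSpace ℝ (Fin 3) → ℝ be smooth on the complement of the origin and homogeneous of degree zero, i.e. f(t • x) = f(x) for all t > 0 and x ≠ 0. Then for every x ≠ 0, the Euclidean Laplacian of the function u(x) = f(x)/‖x‖ satisfies Δu(x) = (Δf)(x)/‖x‖. -/
open scoped BigOperators

/-- The Euclidean Laplacian on `ℝ³`: the sum of the second partial derivatives in the
directions of the standard orthonormal basis. -/
noncomputable def lap (g : EuclideanSpace ℝ (Fin 3) → ℝ) (x : EuclideanSpace ℝ (Fin 3)) : ℝ :=
  ∑ i : Fin 3,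
    fderiv ℝ (fun y => fderiv ℝ g y (EuclideanSpace.single i 1)) x (EuclideanSpace.single i 1)

/-!
In dimension `n`, `Δ(g f) = g Δf + 2 Df(∇g) + (Δg) f`. For `g = ‖·‖ ^ p` the gradient is radial, so
Euler's relation `Df(x) x = k f(x)` for `f` homogeneous of degree `k` turns the cross term into a
multiple of `f`; the last term is one too, as `Δ(‖·‖ ^ p) = p (p + n - 2) ‖·‖ ^ (p - 2)`. Together
they contribute `p (p + n - 2 + 2 k) ‖·‖ ^ (p - 2) f`, which vanishes at the exponent
`p = 2 - n - 2 k` of the Kelvin transform; for `n = 3` and `k = 0` this exponent is `-1`.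
-/

open InnerProductSpace Module
open scoped Gradient Laplacian Topology

section NormedSpace

variable {E F : Type*} [NormedAddCommGroup E] [NormedSpace ℝ E]
  [NormedAddCommGroup F] [NormedSpace ℝ F] {f : E → F} {g : E → ℝ} {x : E}

theorem differentiableAt_fderiv_of_contDiffAt_two (hf : ContDiffAt ℝ 2 f x) :
    DifferentiableAt ℝ (fderiv ℝ f) x :=
  (hf.fderiv_right (m := 1) le_rfl).differentiableAt one_ne_zero

theorem fderiv_fderiv_smul_apply (hg : ContDiffAt ℝ 2 g x) (hf : ContDiffAt ℝ 2 f x) (v w : E) :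
    fderiv ℝ (fun y => fderiv ℝ (fun z => g z • f z) y w) x v =
      g x • fderiv ℝ (fun y => fderiv ℝ f y w) x v
        + (fderiv ℝ g x v • fderiv ℝ f x w + fderiv ℝ g x w • fderiv ℝ f x v)
        + fderiv ℝ (fun y => fderiv ℝ g y w) x v • f x := by
  have first_order : (fun y => fderiv ℝ (fun z => g z • f z) y w) =ᶠ[𝓝 x]
      fun y => g y • fderiv ℝ f y w + fderiv ℝ g y w • f y := by
    filter_upwards [hg.eventually (by simp), hf.eventually (by simp)] with y hgy hfy
    simp [fderiv_fun_smul (hgy.differentiableAt two_ne_zero) (hfy.differentiableAt two_ne_zero)]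
  have hg₁ := hg.differentiableAt two_ne_zero
  have hf₁ := hf.differentiableAt two_ne_zero
  have hg₂ : DifferentiableAt ℝ (fun y => fderiv ℝ g y w) x :=
    (differentiableAt_fderiv_of_contDiffAt_two hg).clm_apply (differentiableAt_const w)
  have hf₂ : DifferentiableAt ℝ (fun y => fderiv ℝ f y w) x :=
    (differentiableAt_fderiv_of_contDiffAt_two hf).clm_apply (differentiableAt_const w)
  rw [first_order.fderiv_eq, fderiv_fun_add (hg₁.fun_smul hf₂) (hg₂.fun_smul hf₁),
    fderiv_fun_smul hg₁ hf₂, fderiv_fun_smul hg₂ hf₁]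
  simp only [add_apply, smul_apply, ContinuousLinearMap.smulRight_apply]
  abel

theorem fderiv_apply_self_of_homogeneous {k : ℝ} (hf : DifferentiableAt ℝ f x)
    (hhom : ∀ᶠ t : ℝ in 𝓝 1, f (t • x) = t ^ k • f x) : fderiv ℝ f x x = k • f x := by
  have along_ray : HasDerivAt (fun t : ℝ => f (t • x)) (fderiv ℝ f x x) 1 := by
    have ray : HasDerivAt (fun t : ℝ => t • x) x 1 := by
      simpa using (hasDerivAt_id (1 : ℝ)).smul_const x
    exact HasFDerivAt.comp_hasDerivAt (1 : ℝ) (by simpa using hf.hasFDerivAt) ray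
  have power : HasDerivAt (fun t : ℝ => t ^ k • f x) (k • f x) 1 := by
    simpa using (Real.hasDerivAt_rpow_const (p := k) (Or.inl one_ne_zero)).smul_const (f x)
  exact along_ray.unique (power.congr_of_eventuallyEq hhom)

end NormedSpace

section NormPow

variable {E : Type*} [NormedAddCommGroup E] [InnerProductSpace ℝ E] {x : E}

theorem hasFDerivAt_norm_rpow_of_ne_zero (hx : x ≠ 0) (p : ℝ) :
    HasFDerivAt (fun y : E => ‖y‖ ^ p) ((p * ‖x‖ ^ (p - 2)) • innerSL ℝ x) x := by
  have norm_rpow_eq (y : E) (q : ℝ) : (‖y‖ ^ 2) ^ (q / 2) = ‖y‖ ^ q := by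
    rw [← Real.rpow_natCast_mul (norm_nonneg y)]
    congr 1
    push_cast
    ring
  have h := (hasStrictFDerivAt_norm_sq x).hasFDerivAt.rpow_const (p := p / 2)
    (Or.inl (pow_ne_zero 2 (norm_ne_zero_iff.mpr hx)))
  simp only [norm_rpow_eq] at h
  convert! h using 1
  rw [← norm_rpow_eq x (p - 2), ← Nat.cast_smul_eq_nsmul ℝ, smul_smul]
  congr 1
  ring_nf

theorem contDiffAt_norm_rpow_of_ne_zero {n : WithTop ℕ∞} (hx : x ≠ 0) (p : ℝ) :
    ContDiffAt ℝ n (fun y : E => ‖y‖ ^ p) x :=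
  (contDiffAt_norm ℝ hx).rpow_const_of_ne (norm_ne_zero_iff.mpr hx)

theorem gradient_norm_rpow [CompleteSpace E] (hx : x ≠ 0) (p : ℝ) :
    ∇ (fun y : E => ‖y‖ ^ p) x = (p * ‖x‖ ^ (p - 2)) • x := by
  refine HasGradientAt.gradient (hasGradientAt_iff_hasFDerivAt.mpr ?_)
  convert! hasFDerivAt_norm_rpow_of_ne_zero hx p using 1
  ext v
  simp

theorem fderiv_fderiv_norm_rpow_apply (hx : x ≠ 0) (p : ℝ) (v w : E) :
    fderiv ℝ (fun y => fderiv ℝ (fun z : E => ‖z‖ ^ p) y w) x v =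
      p * ((p - 2) * ‖x‖ ^ (p - 4) * (inner ℝ x v * inner ℝ x w)
        + ‖x‖ ^ (p - 2) * inner ℝ v w) := by
  have first_order : (fun y => fderiv ℝ (fun z : E => ‖z‖ ^ p) y w) =ᶠ[𝓝 x]
      fun y => p * (‖y‖ ^ (p - 2) * inner ℝ y w) := by
    filter_upwards [eventually_ne_nhds hx] with y hy
    simp [(hasFDerivAt_norm_rpow_of_ne_zero hy p).fderiv, mul_assoc]
  have inner_deriv : HasFDerivAt (fun y : E => inner ℝ y w) (innerSL ℝ w) x := by
    simp only [real_inner_comm w]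
    exact (innerSL ℝ w).hasFDerivAt
  have product := ((hasFDerivAt_norm_rpow_of_ne_zero hx (p - 2)).fun_mul inner_deriv).const_mul p
  rw [first_order.fderiv_eq, product.fderiv]
  simp only [smul_apply, add_apply, innerSL_apply_apply, smul_eq_mul, real_inner_comm v w]
  ring_nf

end NormPow

section Laplacian

variable {E F : Type*} [NormedAddCommGroup E] [InnerProductSpace ℝ E] [FiniteDimensional ℝ E]
  [NormedAddCommGroup F] [NormedSpace ℝ F] {f : E → F} {g : E → ℝ} {x : E}

theorem laplacian_eq_sum_fderiv_fderiv_apply {ι : Type*} [Fintype ι] (b : OrthonormalBasis ι ℝ E)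
    (hf : DifferentiableAt ℝ (fderiv ℝ f) x) :
    Δ f x = ∑ i, fderiv ℝ (fun y => fderiv ℝ f y (b i)) x (b i) := by
  simp [laplacian_eq_iteratedFDeriv_orthonormalBasis f b, iteratedFDeriv_two_apply,
    fderiv_clm_apply hf (differentiableAt_const _)]

theorem laplacian_fun_smul (hg : ContDiffAt ℝ 2 g x) (hf : ContDiffAt ℝ 2 f x) :
    Δ (fun y => g y • f y) x =
      g x • Δ f x + (2 : ℝ) • fderiv ℝ f x (∇ g x) + Δ g x • f x := by
  let b := stdOrthonormalBasis ℝ E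
  have cross_term : ∑ i, fderiv ℝ g x (b i) • fderiv ℝ f x (b i) = fderiv ℝ f x (∇ g x) := by
    conv_rhs => rw [← b.sum_repr' (∇ g x), map_sum]
    simp only [map_smul, inner_gradient_right, conj_trivial]
  rw [laplacian_eq_sum_fderiv_fderiv_apply b
      (differentiableAt_fderiv_of_contDiffAt_two (hg.fun_smul hf)),
    laplacian_eq_sum_fderiv_fderiv_apply b (differentiableAt_fderiv_of_contDiffAt_two hf),
    laplacian_eq_sum_fderiv_fderiv_apply b (differentiableAt_fderiv_of_contDiffAt_two hg),
    ← cross_term, two_smul, Finset.smul_sum, Finset.sum_smul]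
  simp only [fderiv_fderiv_smul_apply hg hf, Finset.sum_add_distrib]

theorem laplacian_norm_rpow (hx : x ≠ 0) (p : ℝ) :
    Δ (fun y : E => ‖y‖ ^ p) x = p * (p + finrank ℝ E - 2) * ‖x‖ ^ (p - 2) := by
  let b := stdOrthonormalBasis ℝ E
  have sum_inner_sq : ∑ i, inner ℝ x (b i) * inner ℝ x (b i) = ‖x‖ ^ 2 := by
    simpa [pow_two] using b.sum_sq_norm_inner_left x
  have sum_inner_self : ∑ i, inner ℝ (b i) (b i) = (finrank ℝ E : ℝ) := by
    simp
  have rpow_sub_four : ‖x‖ ^ (p - 4) * ‖x‖ ^ 2 = ‖x‖ ^ (p - 2) := by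
    rw [← Real.rpow_add_natCast (norm_ne_zero_iff.mpr hx)]
    ring_nf
  rw [laplacian_eq_sum_fderiv_fderiv_apply b
    (differentiableAt_fderiv_of_contDiffAt_two (contDiffAt_norm_rpow_of_ne_zero hx p))]
  simp only [fderiv_fderiv_norm_rpow_apply hx, ← Finset.mul_sum, Finset.sum_add_distrib,
    sum_inner_sq, sum_inner_self]
  linear_combination p * (p - 2) * rpow_sub_four

theorem laplacian_norm_rpow_smul_of_homogeneous {k : ℝ} (hf : ContDiffAt ℝ 2 f x)
    (hhom : ∀ᶠ t : ℝ in 𝓝 1, f (t • x) = t ^ k • f x) (hx : x ≠ 0) (p : ℝ) :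
    Δ (fun y => ‖y‖ ^ p • f y) x =
      ‖x‖ ^ p • Δ f x + (p * (p + finrank ℝ E - 2 + 2 * k) * ‖x‖ ^ (p - 2)) • f x := by
  rw [laplacian_fun_smul (contDiffAt_norm_rpow_of_ne_zero hx p) hf, gradient_norm_rpow hx,
    map_smul, fderiv_apply_self_of_homogeneous (hf.differentiableAt two_ne_zero) hhom,
    laplacian_norm_rpow hx]
  module

theorem laplacian_of_degree_zero_homogeneous_over_norm_general {k : ℝ} (hf : ContDiffAt ℝ 2 f x)
    (hhom : ∀ᶠ t : ℝ in 𝓝 1, f (t • x) = t ^ k • f x) (hx : x ≠ 0) :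
    Δ (fun y => ‖y‖ ^ (2 - finrank ℝ E - 2 * k) • f y) x =
      ‖x‖ ^ (2 - finrank ℝ E - 2 * k) • Δ f x := by
  rw [laplacian_norm_rpow_smul_of_homogeneous hf hhom hx]
  module

end Laplacian

theorem lap_eq_laplacian {g : EuclideanSpace ℝ (Fin 3) → ℝ} {x : EuclideanSpace ℝ (Fin 3)}
    (hg : DifferentiableAt ℝ (fderiv ℝ g) x) : lap g x = Δ g x := by
  simp [lap, laplacian_eq_sum_fderiv_fderiv_apply (EuclideanSpace.basisFun (Fin 3) ℝ) hg]

/-- For `f` smooth away from the origin and homogeneous of degree zero,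
the Laplacian of `u(x) = f(x)/‖x‖` satisfies `Δu(x) = (Δf)(x)/‖x‖` for `x ≠ 0`. -/
theorem laplacian_of_degree_zero_homogeneous_over_norm
    (f : EuclideanSpace ℝ (Fin 3) → ℝ)
    (hf : ContDiffOn ℝ (⊤ : ℕ∞) f {(0 : EuclideanSpace ℝ (Fin 3))}ᶜ)
    (hhom : ∀ t : ℝ, 0 < t → ∀ x : EuclideanSpace ℝ (Fin 3), x ≠ 0 → f (t • x) = f x) :
    ∀ x : EuclideanSpace ℝ (Fin 3), x ≠ 0 →
      lap (fun y => f y / ‖y‖) x = lap f x / ‖x‖ := by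
  intro x hx
  have hfx : ContDiffAt ℝ 2 f x :=
    (hf.contDiffAt (isOpen_compl_singleton.mem_nhds hx)).of_le (WithTop.coe_le_coe.mpr le_top)
  have hquot : ContDiffAt ℝ 2 (fun y => f y / ‖y‖) x :=
    hfx.div (contDiffAt_norm ℝ hx) (norm_ne_zero_iff.mpr hx)
  have hray : ∀ᶠ t : ℝ in 𝓝 1, f (t • x) = t ^ (0 : ℝ) • f x := by
    filter_upwards [eventually_gt_nhds one_pos] with t ht
    simpa using hhom t ht x hx
  rw [lap_eq_laplacian (differentiableAt_fderiv_of_contDiffAt_two hquot),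
    lap_eq_laplacian (differentiableAt_fderiv_of_contDiffAt_two hfx)]
  have kelvin_exponent : (2 : ℝ) - finrank ℝ (EuclideanSpace ℝ (Fin 3)) - 2 * 0 = -1 := by
    norm_num
  simpa only [kelvin_exponent, Real.rpow_neg_one, smul_eq_mul, ← div_eq_inv_mul]
    using laplacian_of_degree_zero_homogeneous_over_norm_general hfx hray hx
end

section
/- Let θ : EuclideanSpace ℝ (Fin 3) → ℝ be twice continuously differentiable and let W : EuclideanSpace ℝ (Fin 3) → EuclideanSpace ℝ (Fin 3) be continuously differentiable, with Δθ(x) = (div W)(x) for all x. Suppose there exist constants μ ∈ ℝ, C > 0 and R₀ > 0 such that for all ‖x‖ ≥ R₀: |θ(x) − μ/‖x‖| ≤ C/‖x‖², ‖∇θ(x) + μ·x/‖x‖³‖ ≤ C/‖x‖³, and ‖W(x)‖ ≤ C/‖x‖³. Then μ = 0. -/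
open scoped BigOperators

/-- The divergence of a vector field on `ℝ³`: `div W = Σ_i ∂W_i/∂x_i`. -/
noncomputable def divergence (W : EuclideanSpace ℝ (Fin 3) → EuclideanSpace ℝ (Fin 3))
    (x : EuclideanSpace ℝ (Fin 3)) : ℝ :=
  ∑ i : Fin 3, fderiv ℝ (fun y => W y i) x (EuclideanSpace.single i 1)

/-!
Set `F = ∇θ - W`. Then `div F = 0` and `F x = -μ x / ‖x‖³ + o(‖x‖⁻²)` at infinity. Integrating
`div F = 0` against a radial cutoff that is constant on the ball of radius `R` and nonincreasing
outside it shows that `F` cannot point strictly outwards at every point outside that ball, and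
neither can `-F`. So the radial component of `F` is neither eventually positive nor eventually
negative, although `‖x‖²` times it tends to `-μ`; hence `μ = 0`.
-/

open MeasureTheory Filter Topology Bornology Asymptotics Gradient
open scoped RealInnerProductSpace

lemma trace_eq_sum_coord {R M ι : Type*} [CommSemiring R] [AddCommMonoid M] [Module R M] [Fintype ι]
    (b : Module.Basis ι R M) (T : M →ₗ[R] M) :
    LinearMap.trace R M T = ∑ i, b.coord i (T (b i)) := by
  classical
  simp [LinearMap.trace_eq_matrix_trace R b, Matrix.trace, LinearMap.toMatrix_apply]

lemma integral_mul_trace_fderiv_eq_neg_integral_fderiv {E : Type*} [NormedAddCommGroup E]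
    [NormedSpace ℝ E] [FiniteDimensional ℝ E] [MeasurableSpace E] [BorelSpace E] {ν : Measure E}
    [ν.IsAddHaarMeasure] {φ : E → ℝ} (hφ : ContDiff ℝ 1 φ) (hφc : HasCompactSupport φ)
    {F : E → E} (hF : ContDiff ℝ 1 F) :
    ∫ x, φ x * LinearMap.trace ℝ E (fderiv ℝ F x) ∂ν = -∫ x, fderiv ℝ φ x (F x) ∂ν := by
  let b := Module.finBasis ℝ E
  let c i : E →L[ℝ] ℝ := (b.coord i).toContinuousLinearMap
  have hcF i : ContDiff ℝ 1 (fun y => c i (F y)) := (c i).contDiff.comp hF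
  have fderiv_cF i x v : fderiv ℝ (fun y => c i (F y)) x v = c i (fderiv ℝ F x v) := by
    have := (c i).hasFDerivAt.comp x (hF.differentiable one_ne_zero x).hasFDerivAt
    exact DFunLike.congr_fun this.fderiv v
  have h_trace x : φ x * LinearMap.trace ℝ E (fderiv ℝ F x)
      = ∑ i, φ x * fderiv ℝ (fun y => c i (F y)) x (b i) := by
    simp only [trace_eq_sum_coord b, Finset.mul_sum, fderiv_cF]
    rfl
  have h_apply x : fderiv ℝ φ x (F x) = ∑ i, fderiv ℝ φ x (b i) * c i (F x) := by
    conv_lhs => rw [← b.sum_repr (F x)]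
    simp [c, -Module.Basis.sum_repr, mul_comm]
  have cont_φ' i : Continuous fun x => fderiv ℝ φ x (b i) :=
    (hφ.continuous_fderiv one_ne_zero).clm_apply continuous_const
  have int_left i : Integrable (fun x => φ x * fderiv ℝ (fun y => c i (F y)) x (b i)) ν :=
    (hφ.continuous.mul <| ((hcF i).continuous_fderiv one_ne_zero).clm_apply
      continuous_const).integrable_of_hasCompactSupport hφc.mul_right
  have int_right i : Integrable (fun x => fderiv ℝ φ x (b i) * c i (F x)) ν :=
    ((cont_φ' i).mul (hcF i).continuous).integrable_of_hasCompactSupport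
      (hφc.fderiv_apply ℝ (b i)).mul_right
  have int_prod i : Integrable (fun x => φ x * c i (F x)) ν :=
    (hφ.continuous.mul (hcF i).continuous).integrable_of_hasCompactSupport hφc.mul_right
  simp_rw [h_trace, h_apply]
  rw [integral_finsetSum _ fun i _ => int_left i, integral_finsetSum _ fun i _ => int_right i,
    ← Finset.sum_neg_distrib]
  exact Finset.sum_congr rfl fun i _ => integral_mul_fderiv_eq_neg_fderiv_mul_of_integrable
    (int_right i) (int_left i) (int_prod i) (fun x _ => hφ.differentiable one_ne_zero x)
    fun x _ => (hcF i).differentiable one_ne_zero x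

section RadialCutoff

lemma deriv_smoothTransition_nonneg (t : ℝ) : 0 ≤ deriv Real.smoothTransition t :=
  Real.smoothTransition.monotone.deriv_nonneg

lemma deriv_smoothTransition_of_one_le {t : ℝ} (ht : 1 ≤ t) : deriv Real.smoothTransition t = 0 :=
  IsLocalMax.deriv_eq_zero <| .of_forall fun s => by
    simpa [Real.smoothTransition.one_of_one_le ht] using Real.smoothTransition.le_one s

lemma exists_deriv_smoothTransition_eq_one :
    ∃ t ∈ Set.Ioo (0 : ℝ) 1, deriv Real.smoothTransition t = 1 := by
  obtain ⟨t, ht, h⟩ := exists_deriv_eq_slope Real.smoothTransition zero_lt_one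
    Real.smoothTransition.continuous.continuousOn
    (Real.smoothTransition.contDiff (n := 1).differentiable one_ne_zero).differentiableOn
  exact ⟨t, ht, by simpa using h⟩

variable {E : Type*} [NormedAddCommGroup E] (R : ℝ)

/-- A radial cutoff on `E`: equal to `1` for `‖x‖ ≤ R`, nonincreasing in `‖x‖`, and equal to `0` for
`‖x‖ ^ 2 ≥ R ^ 2 + 1`. It depends on `‖x‖ ^ 2` rather than on `‖x‖` so as to be smooth at `0` in an
inner product space. Here `0 ≤ R` is understood; otherwise `R` acts as `|R|`. -/
noncomputable def radialCutoff (x : E) : ℝ := Real.smoothTransition (R ^ 2 + 1 - ‖x‖ ^ 2)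

lemma radialCutoff_nonneg (x : E) : 0 ≤ radialCutoff R x := Real.smoothTransition.nonneg _

lemma hasCompactSupport_radialCutoff [ProperSpace E] :
    HasCompactSupport (radialCutoff R : E → ℝ) := by
  refine .intro (isCompact_closedBall 0 (|R| + 1)) fun x hx => ?_
  have hx : |R| + 1 < ‖x‖ := by simpa using hx
  refine Real.smoothTransition.zero_of_nonpos ?_
  nlinarith [abs_nonneg R, sq_abs R]

variable [InnerProductSpace ℝ E]

lemma contDiff_radialCutoff {n : ℕ∞} : ContDiff ℝ n (radialCutoff R : E → ℝ) :=
  Real.smoothTransition.contDiff.comp (contDiff_const.sub (contDiff_norm_sq ℝ))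

lemma fderiv_radialCutoff_apply (x v : E) :
    fderiv ℝ (radialCutoff R) x v =
      -2 * deriv Real.smoothTransition (R ^ 2 + 1 - ‖x‖ ^ 2) * ⟪v, x⟫ := by
  have hσ := (Real.smoothTransition.contDiff (n := 1).differentiable one_ne_zero
    (R ^ 2 + 1 - ‖x‖ ^ 2)).hasDerivAt
  have hnorm := (hasStrictFDerivAt_norm_sq x).hasFDerivAt.const_sub (R ^ 2 + 1)
  rw [show fderiv ℝ (radialCutoff R) x = _ from (hσ.comp_hasFDerivAt x hnorm).fderiv]
  simp only [smul_neg, neg_apply, smul_apply, coe_innerSL_apply, nsmul_eq_mul, Nat.cast_ofNat,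
    smul_eq_mul, real_inner_comm]
  ring

variable {R}

lemma fderiv_radialCutoff_apply_nonpos {x v : E} (hv : R ≤ ‖x‖ → 0 ≤ ⟪v, x⟫) :
    fderiv ℝ (radialCutoff R) x v ≤ 0 := by
  rw [fderiv_radialCutoff_apply]
  rcases le_or_gt R ‖x‖ with hx | hx
  · nlinarith [mul_nonneg (deriv_smoothTransition_nonneg (R ^ 2 + 1 - ‖x‖ ^ 2)) (hv hx)]
  · have : 1 ≤ R ^ 2 + 1 - ‖x‖ ^ 2 := by nlinarith [norm_nonneg x]
    simp [deriv_smoothTransition_of_one_le this]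

lemma exists_fderiv_radialCutoff_apply_eq [Nontrivial E] :
    ∃ x : E, R ≤ ‖x‖ ∧ ∀ v, fderiv ℝ (radialCutoff R) x v = -2 * ⟪v, x⟫ := by
  obtain ⟨t, ⟨-, ht_lt⟩, ht⟩ := exists_deriv_smoothTransition_eq_one
  obtain ⟨x, hx⟩ := exists_norm_eq E (Real.sqrt_nonneg (R ^ 2 + 1 - t))
  have hx_sq : ‖x‖ ^ 2 = R ^ 2 + 1 - t := by rw [hx, Real.sq_sqrt (by nlinarith [sq_nonneg R])]
  refine ⟨x, hx ▸ Real.le_sqrt_of_sq_le (by linarith), fun v => ?_⟩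
  rw [fderiv_radialCutoff_apply, hx_sq, sub_sub_cancel, ht, mul_one]

lemma integral_fderiv_radialCutoff_apply_neg [ProperSpace E] [Nontrivial E] [MeasurableSpace E]
    [BorelSpace E] {ν : Measure E} [ν.IsOpenPosMeasure] [IsFiniteMeasureOnCompacts ν] {F : E → E}
    (hF : Continuous F) (h_out : ∀ x, R ≤ ‖x‖ → 0 < ⟪F x, x⟫) :
    ∫ x, fderiv ℝ (radialCutoff R) x (F x) ∂ν < 0 := by
  have h_cont : Continuous fun x => -fderiv ℝ (radialCutoff R) x (F x) :=
    (((contDiff_radialCutoff R (n := 1)).continuous_fderiv one_ne_zero).clm_apply hF).neg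
  have h_supp : HasCompactSupport fun x => -fderiv ℝ (radialCutoff R) x (F x) :=
    ((hasCompactSupport_radialCutoff R).fderiv (𝕜 := ℝ)).mono fun x => by
      contrapose!
      simp +contextual
  obtain ⟨x₀, hx₀, h_eq⟩ := exists_fderiv_radialCutoff_apply_eq (E := E) (R := R)
  rw [← neg_pos, ← integral_neg]
  refine h_cont.integral_pos_of_hasCompactSupport_nonneg_nonzero h_supp
    (fun x => neg_nonneg.2 <| fderiv_radialCutoff_apply_nonpos fun hx => (h_out x hx).le)
    (x := x₀) ?_
  simpa [h_eq] using (h_out x₀ hx₀).ne'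

end RadialCutoff

section Flux

variable {E : Type*} [NormedAddCommGroup E] [InnerProductSpace ℝ E] [FiniteDimensional ℝ E]
  [Nontrivial E] {F : E → E}

lemma exists_le_norm_and_inner_self_nonpos (hF : ContDiff ℝ 1 F)
    (hdiv : ∀ x, LinearMap.trace ℝ E (fderiv ℝ F x) ≤ 0) (R : ℝ) :
    ∃ x, R ≤ ‖x‖ ∧ ⟪F x, x⟫ ≤ 0 := by
  by_contra! h_out
  borelize E
  have flux_neg : ∫ x, fderiv ℝ (radialCutoff R) x (F x) < 0 :=
    integral_fderiv_radialCutoff_apply_neg hF.continuous h_out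
  have flux_nonneg : 0 ≤ ∫ x, fderiv ℝ (radialCutoff R) x (F x) := by
    rw [← neg_nonpos, ← integral_mul_trace_fderiv_eq_neg_integral_fderiv
      (contDiff_radialCutoff R) (hasCompactSupport_radialCutoff R) hF]
    exact integral_nonpos fun x => mul_nonpos_of_nonneg_of_nonpos (radialCutoff_nonneg R x) (hdiv x)
  exact flux_neg.not_ge flux_nonneg

lemma frequently_inner_self_nonpos (hF : ContDiff ℝ 1 F)
    (hdiv : ∀ x, LinearMap.trace ℝ E (fderiv ℝ F x) ≤ 0) :
    ∃ᶠ x in cobounded E, ⟪F x, x⟫ ≤ 0 :=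
  hasBasis_cobounded_norm.frequently_iff.2 fun {R} _ =>
    exists_le_norm_and_inner_self_nonpos hF hdiv R

end Flux

section Charge

variable {E : Type*} [NormedAddCommGroup E] [InnerProductSpace ℝ E] {F : E → E} {μ : ℝ} {n : ℕ}

lemma tendsto_norm_pow_mul_inner_self_div_norm
    (h : (fun x => F x + (μ / ‖x‖ ^ (n + 1)) • x) =o[cobounded E] fun x => (‖x‖ ^ n)⁻¹) :
    Tendsto (fun x => ‖x‖ ^ n * (⟪F x, x⟫ / ‖x‖)) (cobounded E) (𝓝 (-μ)) := by
  rw [tendsto_iff_norm_sub_tendsto_zero]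
  refine squeeze_zero' (.of_forall fun _ => norm_nonneg _) ?_ h.norm_left.tendsto_div_nhds_zero
  filter_upwards [eventually_ne_cobounded 0] with x hx
  have : 0 < ‖x‖ := norm_pos_iff.2 hx
  set v := F x + (μ / ‖x‖ ^ (n + 1)) • x with hv
  have radial_error : ‖x‖ ^ n * (⟪F x, x⟫ / ‖x‖) - -μ = ‖x‖ ^ n / ‖x‖ * ⟪v, x⟫ := by
    rw [hv, inner_add_left, real_inner_smul_left, real_inner_self_eq_norm_sq]
    field_simp
    ring
  calc ‖‖x‖ ^ n * (⟪F x, x⟫ / ‖x‖) - -μ‖ = ‖x‖ ^ n / ‖x‖ * |⟪v, x⟫| := by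
        rw [radial_error, norm_mul, Real.norm_of_nonneg (by positivity), Real.norm_eq_abs]
    _ ≤ ‖x‖ ^ n / ‖x‖ * (‖v‖ * ‖x‖) := by gcongr; exact abs_real_inner_le_norm v x
    _ = ‖v‖ / (‖x‖ ^ n)⁻¹ := by field_simp

variable [FiniteDimensional ℝ E] [Nontrivial E]

lemma charge_nonneg_of_trace_fderiv_nonpos (hF : ContDiff ℝ 1 F)
    (hdiv : ∀ x, LinearMap.trace ℝ E (fderiv ℝ F x) ≤ 0)
    (h : (fun x => F x + (μ / ‖x‖ ^ (n + 1)) • x) =o[cobounded E] fun x => (‖x‖ ^ n)⁻¹) :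
    0 ≤ μ := by
  refine neg_nonpos.1 <| le_of_tendsto_of_frequently (tendsto_norm_pow_mul_inner_self_div_norm h) <|
    (frequently_inner_self_nonpos hF hdiv).mono fun x hx => ?_
  exact mul_nonpos_of_nonneg_of_nonpos (by positivity)
    (div_nonpos_of_nonpos_of_nonneg hx (norm_nonneg x))

lemma charge_eq_zero_of_trace_fderiv_eq_zero (hF : ContDiff ℝ 1 F)
    (hdiv : ∀ x, LinearMap.trace ℝ E (fderiv ℝ F x) = 0)
    (h : (fun x => F x + (μ / ‖x‖ ^ (n + 1)) • x) =o[cobounded E] fun x => (‖x‖ ^ n)⁻¹) :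
    μ = 0 := by
  refine le_antisymm (neg_nonneg.1 ?_) (charge_nonneg_of_trace_fderiv_nonpos hF (hdiv · |>.le) h)
  refine charge_nonneg_of_trace_fderiv_nonpos hF.neg (fun x => ?_)
    (h.neg_left.congr_left fun x => ?_)
  · simp [hdiv]
  · module

end Charge

lemma isLittleO_inv_norm_pow_of_norm_le {E G : Type*} [NormedAddCommGroup E]
    [SeminormedAddCommGroup G] {f : E → G} {C R : ℝ} {m n : ℕ} (hnm : n < m)
    (hf : ∀ x, R ≤ ‖x‖ → ‖f x‖ ≤ C / ‖x‖ ^ m) :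
    f =o[cobounded E] fun x => (‖x‖ ^ n)⁻¹ := by
  have f_isBigO : f =O[cobounded E] fun x => (‖x‖ ^ m)⁻¹ := by
    refine .of_bound C <| (eventually_cobounded_le_norm R).mono fun x hx => ?_
    simpa [div_eq_mul_inv] using hf x hx
  have pow_isLittleO : (fun x : E => ‖x‖ ^ n) =o[cobounded E] fun x => ‖x‖ ^ m :=
    (isLittleO_pow_pow_atTop_of_lt hnm).comp_tendsto tendsto_norm_cobounded_atTop
  refine f_isBigO.trans_isLittleO <| pow_isLittleO.inv_rev ?_
  filter_upwards [eventually_ne_cobounded 0] with x hx h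
  exact absurd h (pow_ne_zero n (norm_ne_zero_iff.2 hx))

lemma contDiff_gradient {E : Type*} [NormedAddCommGroup E] [InnerProductSpace ℝ E]
    [CompleteSpace E] {m n : WithTop ℕ∞} {f : E → ℝ} (hf : ContDiff ℝ n f) (hmn : m + 1 ≤ n) :
    ContDiff ℝ m (∇ f) :=
  (InnerProductSpace.toDual ℝ E).symm.contDiff.comp (hf.fderiv_right hmn)

lemma divergence_eq_trace_fderiv {V : EuclideanSpace ℝ (Fin 3) → EuclideanSpace ℝ (Fin 3)}
    {x : EuclideanSpace ℝ (Fin 3)} (hV : DifferentiableAt ℝ V x) :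
    divergence V x = LinearMap.trace ℝ _ (fderiv ℝ V x).toLinearMap := by
  rw [LinearMap.trace_eq_sum_inner _ (EuclideanSpace.basisFun (Fin 3) ℝ)]
  refine Finset.sum_congr rfl fun i _ => ?_
  have hV_i : HasFDerivAt (fun y => V y i) _ x :=
    (PiLp.hasFDerivAt_apply (𝕜 := ℝ) 2 (V x) i).comp x hV.hasFDerivAt
  rw [hV_i.fderiv]
  simp [EuclideanSpace.inner_single_left]

lemma lap_eq_divergence_gradient (g : EuclideanSpace ℝ (Fin 3) → ℝ) :
    lap g = divergence (∇ g) := by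
  have gradient_apply y i : ∇ g y i = fderiv ℝ g y (EuclideanSpace.single i 1) := by
    simp [← inner_gradient_left, EuclideanSpace.inner_single_right]
  simp only [funext_iff, lap, divergence, gradient_apply, implies_true]

theorem scalar_charge_vanishes_for_divergence_source_general
    (θ : EuclideanSpace ℝ (Fin 3) → ℝ)
    (W : EuclideanSpace ℝ (Fin 3) → EuclideanSpace ℝ (Fin 3))
    (hθ : ContDiff ℝ 2 θ) (hW : ContDiff ℝ 1 W)
    (heq : ∀ x : EuclideanSpace ℝ (Fin 3), lap θ x = divergence W x) (μ : ℝ)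
    (hgrad : (fun x => ∇ θ x + (μ / ‖x‖ ^ 3) • x) =o[cobounded (EuclideanSpace ℝ (Fin 3))]
      fun x => (‖x‖ ^ 2)⁻¹)
    (hWdecay : W =o[cobounded (EuclideanSpace ℝ (Fin 3))] fun x => (‖x‖ ^ 2)⁻¹) :
    μ = 0 := by
  have h_grad : ContDiff ℝ 1 (∇ θ) := contDiff_gradient hθ one_add_one_eq_two.le
  have h_div x : LinearMap.trace ℝ _ (fderiv ℝ (∇ θ - W) x).toLinearMap = 0 := by
    have h_grad_diff := h_grad.differentiable one_ne_zero x
    have hW_diff := hW.differentiable one_ne_zero x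
    rw [fderiv_sub h_grad_diff hW_diff, ContinuousLinearMap.toLinearMap_sub, map_sub,
      ← divergence_eq_trace_fderiv h_grad_diff, ← divergence_eq_trace_fderiv hW_diff,
      ← lap_eq_divergence_gradient, heq, sub_self]
  refine charge_eq_zero_of_trace_fderiv_eq_zero (n := 2) (h_grad.sub hW) h_div ?_
  refine (hgrad.sub hWdecay).congr_left fun x => ?_
  module

/-- Flat-space form of the stellar no-hair mechanism: if `Δθ = div W` with `W` decaying
as `1/‖x‖³`, and `θ` has a `μ/‖x‖` tail (with the stated decay of the errors), then the
scalar charge `μ` vanishes. -/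
theorem scalar_charge_vanishes_for_divergence_source
    (θ : EuclideanSpace ℝ (Fin 3) → ℝ)
    (W : EuclideanSpace ℝ (Fin 3) → EuclideanSpace ℝ (Fin 3))
    (hθ : ContDiff ℝ 2 θ) (hW : ContDiff ℝ 1 W)
    (heq : ∀ x : EuclideanSpace ℝ (Fin 3), lap θ x = divergence W x)
    (μ C R₀ : ℝ) (hC : 0 < C) (hR₀ : 0 < R₀)
    (hfar : ∀ x : EuclideanSpace ℝ (Fin 3), R₀ ≤ ‖x‖ →
      |θ x - μ / ‖x‖| ≤ C / ‖x‖ ^ 2)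
    (hgrad : ∀ x : EuclideanSpace ℝ (Fin 3), R₀ ≤ ‖x‖ →
      ‖gradient θ x + (μ / ‖x‖ ^ 3) • x‖ ≤ C / ‖x‖ ^ 3)
    (hWdecay : ∀ x : EuclideanSpace ℝ (Fin 3), R₀ ≤ ‖x‖ → ‖W x‖ ≤ C / ‖x‖ ^ 3) :
    μ = 0 := by
  exact scalar_charge_vanishes_for_divergence_source_general θ W hθ hW heq μ
    (isLittleO_inv_norm_pow_of_norm_le (by norm_num) hgrad)
    (isLittleO_inv_norm_pow_of_norm_le (by norm_num) hWdecay)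
end
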